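/- Let v¹, v², v³ : ℝ × ℝ → ℝ be smooth solutions of the heat equation v_t + v_xx = 0 whose Wronskian with respect to x, W(v̄) := det[v̄, v̄_x, v̄_xx], is nonzero at every point (t,x). Define ξ⁰ := (∂_x W(v̄))/W(v̄), η¹ := det[v̄, v̄_xx, v̄_xxx]/W(v̄), and η⁰ := −2·det[v̄_x, v̄_xx, v̄_xxx]/W(v̄). Then the triple (ξ⁰, η¹, η⁰) satisfies the determining system for the no-go case of regular reduction operators of the Burgers equation: ξ⁰_t + 2ξ⁰·ξ⁰_x + ξ⁰_xx − 2η¹_x = 0, η¹_t + 2ξ⁰_x·η¹ + η¹_xx + η⁰_x = 0, and η⁰_t + 2ξ⁰_x·η⁰ + η⁰_xx = 0 at every point. -/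

import Mathlib

/-- Partial derivative with respect to the first variable `t`. -/
noncomputable def pt (f : ℝ × ℝ → ℝ) : ℝ × ℝ → ℝ :=
  fun p => deriv (fun s => f (s, p.2)) p.1

/-- Partial derivative with respect to the second variable `x`. -/
noncomputable def px (f : ℝ × ℝ → ℝ) : ℝ × ℝ → ℝ :=
  fun p => deriv (fun s => f (p.1, s)) p.2

/-- Determinant of the 3×3 matrix with columns `a`, `b`, `c`. -/
noncomputable def det3 (a b c : Fin 3 → ℝ) : ℝ :=
  Matrix.det !![a 0, b 0, c 0; a 1, b 1, c 1; a 2, b 2, c 2]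


open scoped ContDiff

theorem px_eq_fderiv {f : ℝ × ℝ → ℝ} (hf : ContDiff ℝ ∞ f) : px f = fun p => fderiv ℝ f p (0, 1) := by
  funext p
  have h1 : HasFDerivAt f (fderiv ℝ f p) (p.1, p.2) :=
    (hf.differentiable (by simp) p).hasFDerivAt
  have h2 : HasDerivAt (fun s : ℝ => (p.1, s)) ((0 : ℝ), (1 : ℝ)) p.2 :=
    (hasDerivAt_const _ _).prodMk (hasDerivAt_id _)
  exact (h1.comp_hasDerivAt p.2 h2).deriv

theorem pt_eq_fderiv {f : ℝ × ℝ → ℝ} (hf : ContDiff ℝ ∞ f) : pt f = fun p => fderiv ℝ f p (1, 0) := by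
  funext p
  have h1 : HasFDerivAt f (fderiv ℝ f p) (p.1, p.2) :=
    (hf.differentiable (by simp) p).hasFDerivAt
  have h2 : HasDerivAt (fun s : ℝ => (s, p.2)) ((1 : ℝ), (0 : ℝ)) p.1 :=
    (hasDerivAt_id _).prodMk (hasDerivAt_const _ _)
  exact (h1.comp_hasDerivAt p.1 h2).deriv

theorem fd_smooth {f : ℝ × ℝ → ℝ} (hf : ContDiff ℝ ∞ f) (w : ℝ × ℝ) :
    ContDiff ℝ ∞ (fun p => fderiv ℝ f p w) :=
  (hf.fderiv_right (m := ∞) (by simp)).clm_apply contDiff_const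

theorem px_smooth {f : ℝ × ℝ → ℝ} (hf : ContDiff ℝ ∞ f) : ContDiff ℝ ∞ (px f) := by
  rw [px_eq_fderiv hf]; exact fd_smooth hf _

theorem pt_smooth {f : ℝ × ℝ → ℝ} (hf : ContDiff ℝ ∞ f) : ContDiff ℝ ∞ (pt f) := by
  rw [pt_eq_fderiv hf]; exact fd_smooth hf _

theorem pt_px {f : ℝ × ℝ → ℝ} (hf : ContDiff ℝ ∞ f) : pt (px f) = px (pt f) := by
  rw [pt_eq_fderiv (px_smooth hf), px_eq_fderiv (pt_smooth hf), px_eq_fderiv hf, pt_eq_fderiv hf]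
  funext p
  have hd : DifferentiableAt ℝ (fderiv ℝ f) p :=
    (hf.fderiv_right (m := ∞) (by simp)).differentiable (by simp) p
  have hs : IsSymmSndFDerivAt ℝ f p := hf.contDiffAt.isSymmSndFDerivAt (by
    simp only [minSmoothness_of_isRCLikeNormedField]; exact WithTop.coe_le_coe.mpr (le_top : (2 : ℕ∞) ≤ ⊤))
  rw [fderiv_clm_apply hd (by fun_prop), fderiv_clm_apply hd (by fun_prop)]
  simpa using hs (1, 0) (0, 1)

theorem px_mul {f g : ℝ × ℝ → ℝ} (hf : ContDiff ℝ ∞ f) (hg : ContDiff ℝ ∞ g) :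
    px (fun p => f p * g p) = fun p => px f p * g p + f p * px g p := by
  rw [px_eq_fderiv (hf.mul hg), px_eq_fderiv hf, px_eq_fderiv hg]
  funext p
  rw [fderiv_fun_mul (hf.differentiable (by simp) p) (hg.differentiable (by simp) p)]
  simp; ring

theorem pt_mul {f g : ℝ × ℝ → ℝ} (hf : ContDiff ℝ ∞ f) (hg : ContDiff ℝ ∞ g) :
    pt (fun p => f p * g p) = fun p => pt f p * g p + f p * pt g p := by
  rw [pt_eq_fderiv (hf.mul hg), pt_eq_fderiv hf, pt_eq_fderiv hg]
  funext p
  rw [fderiv_fun_mul (hf.differentiable (by simp) p) (hg.differentiable (by simp) p)]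
  simp; ring

theorem px_add {f g : ℝ × ℝ → ℝ} (hf : ContDiff ℝ ∞ f) (hg : ContDiff ℝ ∞ g) :
    px (fun p => f p + g p) = fun p => px f p + px g p := by
  rw [px_eq_fderiv (hf.add hg), px_eq_fderiv hf, px_eq_fderiv hg]
  funext p
  rw [fderiv_fun_add (hf.differentiable (by simp) p) (hg.differentiable (by simp) p)]
  simp

theorem pt_add {f g : ℝ × ℝ → ℝ} (hf : ContDiff ℝ ∞ f) (hg : ContDiff ℝ ∞ g) :
    pt (fun p => f p + g p) = fun p => pt f p + pt g p := by
  rw [pt_eq_fderiv (hf.add hg), pt_eq_fderiv hf, pt_eq_fderiv hg]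
  funext p
  rw [fderiv_fun_add (hf.differentiable (by simp) p) (hg.differentiable (by simp) p)]
  simp

theorem px_cmul {f : ℝ × ℝ → ℝ} (k : ℝ) : px (fun p => k * f p) = fun p => k * px f p := by
  funext p; simp [px]

theorem pt_cmul {f : ℝ × ℝ → ℝ} (k : ℝ) : pt (fun p => k * f p) = fun p => k * pt f p := by
  funext p; simp [pt]

/-- Compatibility of the third-order equation with the heat equation. -/
theorem core {u a b c : ℝ × ℝ → ℝ} (hu : ContDiff ℝ ∞ u) (ha : ContDiff ℝ ∞ a)
    (hb : ContDiff ℝ ∞ b) (hc : ContDiff ℝ ∞ c)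
    (hheat : ∀ p, pt u p + px (px u) p = 0)
    (hL : ∀ p, px (px (px u)) p
      = a p * px (px u) p + (-1) * (b p * px u p) + (-1 / 2) * (c p * u p)) (p : ℝ × ℝ) :
    (pt a p + 2 * a p * px a p + px (px a) p - 2 * px b p) * px (px u) p
    - (pt b p + 2 * px a p * b p + px (px b) p + px c p) * px u p
    - (pt c p + 2 * px a p * c p + px (px c) p) / 2 * u p = 0 := by
  have h1 := px_smooth hu
  have h2 := px_smooth h1
  have h3 := px_smooth h2
  have ha1 := px_smooth ha
  have hb1 := px_smooth hb
  have hc1 := px_smooth hc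
  have ht0 : pt u = fun p => (-1) * px (px u) p := by
    funext q; linarith [hheat q]
  have ht1 : pt (px u) = fun p => (-1) * px (px (px u)) p := by
    rw [pt_px hu, ht0, px_cmul]
  have ht2 : pt (px (px u)) = fun p => (-1) * px (px (px (px u))) p := by
    rw [pt_px h1, ht1, px_cmul]
  have ht3 : pt (px (px (px u))) = fun p => (-1) * px (px (px (px (px u)))) p := by
    rw [pt_px h2, ht2, px_cmul]
  have hLf : px (px (px u)) = fun p =>
      a p * px (px u) p + (-1) * (b p * px u p) + (-1 / 2) * (c p * u p) := funext hL
  have e1 : px (px (px (px u))) = fun p =>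
      (px a p * px (px u) p + a p * px (px (px u)) p)
      + (-1) * (px b p * px u p + b p * px (px u) p)
      + (-1 / 2) * (px c p * u p + c p * px u p) := by
    conv_lhs => rw [hLf]
    rw [px_add (by fun_prop) (by fun_prop), px_add (by fun_prop) (by fun_prop), px_cmul, px_cmul,
      px_mul ha h2, px_mul hb h1, px_mul hc hu]
  have e2 : px (px (px (px (px u)))) = fun p =>
      ((px (px a) p * px (px u) p + px a p * px (px (px u)) p)
        + (px a p * px (px (px u)) p + a p * px (px (px (px u))) p))
      + (-1) * ((px (px b) p * px u p + px b p * px (px u) p)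
        + (px b p * px (px u) p + b p * px (px (px u)) p))
      + (-1 / 2) * ((px (px c) p * u p + px c p * px u p)
        + (px c p * px u p + c p * px (px u) p)) := by
    conv_lhs => rw [e1]
    rw [px_add (by fun_prop) (by fun_prop), px_add (by fun_prop) (by fun_prop), px_cmul, px_cmul,
      px_add (by fun_prop) (by fun_prop), px_add (by fun_prop) (by fun_prop),
      px_add (by fun_prop) (by fun_prop),
      px_mul ha1 h2, px_mul ha h3, px_mul hb1 h1, px_mul hb h2, px_mul hc1 hu, px_mul hc h1]
  have e3 : pt (px (px (px u))) = fun p =>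
      (pt a p * px (px u) p + a p * pt (px (px u)) p)
      + (-1) * (pt b p * px u p + b p * pt (px u) p)
      + (-1 / 2) * (pt c p * u p + c p * pt u p) := by
    conv_lhs => rw [hLf]
    rw [pt_add (by fun_prop) (by fun_prop), pt_add (by fun_prop) (by fun_prop), pt_cmul, pt_cmul,
      pt_mul ha h2, pt_mul hb h1, pt_mul hc hu]
  have f2 := congrFun e2 p
  have f3 := congrFun e3 p
  have g0 := congrFun ht0 p
  have g1 := congrFun ht1 p
  have g2 := congrFun ht2 p
  have g3 := congrFun ht3 p
  have l := hL p
  rw [g0, g1, g2, g3] at f3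
  linear_combination -f2 - f3 - 2 * px a p * l

theorem det3_expand (a b c : Fin 3 → ℝ) : det3 a b c =
    a 0 * b 1 * c 2 - a 0 * c 1 * b 2 - b 0 * a 1 * c 2 + b 0 * c 1 * a 2
      + c 0 * a 1 * b 2 - c 0 * b 1 * a 2 := by
  simp [det3, Matrix.det_fin_three]

theorem det3_smooth {f g h : Fin 3 → ℝ × ℝ → ℝ} (hf : ∀ i, ContDiff ℝ ∞ (f i))
    (hg : ∀ i, ContDiff ℝ ∞ (g i)) (hh : ∀ i, ContDiff ℝ ∞ (h i)) :
    ContDiff ℝ ∞ (fun p => det3 (fun i => f i p) (fun i => g i p) (fun i => h i p)) := by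
  simp only [det3_expand]
  have := hf 0; have := hf 1; have := hf 2
  have := hg 0; have := hg 1; have := hg 2
  have := hh 0; have := hh 1; have := hh 2
  fun_prop

theorem px_W {v : Fin 3 → ℝ × ℝ → ℝ} (hv : ∀ i, ContDiff ℝ ∞ (v i)) (p : ℝ × ℝ) :
    px (fun p => det3 (fun i => v i p) (fun i => px (v i) p) (fun i => px (px (v i)) p)) p
    = det3 (fun i => v i p) (fun i => px (v i) p) (fun i => px (px (px (v i))) p) := by
  have key : ∀ f : ℝ × ℝ → ℝ, ContDiff ℝ ∞ f →
      HasDerivAt (fun s => f (p.1, s)) (px f p) p.2 := by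
    intro f hf
    have : DifferentiableAt ℝ (fun s => f (p.1, s)) p.2 :=
      DifferentiableAt.comp p.2 (hf.differentiable (by simp) _) (by fun_prop)
    exact this.hasDerivAt
  have k0 := fun i => key _ (hv i)
  have k1 := fun i => key _ (px_smooth (hv i))
  have k2 := fun i => key _ (px_smooth (px_smooth (hv i)))
  simp only [det3_expand]
  have T := fun i j k => ((k0 i).mul (k1 j)).mul (k2 k)
  have := (((((T 0 1 2).sub (T 0 2 1)).sub (T 1 0 2)).add (T 2 0 1)).add (T 1 2 0)).sub (T 2 1 0)
  have h2 := this.deriv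
  refine Eq.trans ?_ (h2.trans ?_)
  · change deriv _ p.2 = _
    congr 1
    funext s
    simp only [Pi.add_apply, Pi.sub_apply, Pi.mul_apply]
    ring
  · simp only [Pi.mul_apply]
    ring

theorem lin_zero {r s t : Fin 3 → ℝ} (h : det3 r s t ≠ 0) {A B C : ℝ}
    (e : ∀ i, A * t i - B * s i - C / 2 * r i = 0) : A = 0 ∧ B = 0 ∧ C = 0 := by
  have e0 := e 0
  have e1 := e 1
  have e2 := e 2
  have hd := det3_expand r s t
  refine ⟨?_, ?_, ?_⟩ <;> refine (mul_eq_zero.mp ?_).resolve_right h <;> rw [hd]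
  · linear_combination (r 1 * s 2 - s 1 * r 2) * e0 - (r 0 * s 2 - s 0 * r 2) * e1
      + (r 0 * s 1 - s 0 * r 1) * e2
  · linear_combination (r 1 * t 2 - t 1 * r 2) * e0 - (r 0 * t 2 - t 0 * r 2) * e1
      + (r 0 * t 1 - t 0 * r 1) * e2
  · linear_combination (-2) * ((s 1 * t 2 - t 1 * s 2) * e0 - (s 0 * t 2 - t 0 * s 2) * e1
      + (s 0 * t 1 - t 0 * s 1) * e2)

/-- Given a triple of smooth solutions of the heat equation with nonvanishing
Wronskian, the coefficients `ξ⁰ = (W(v̄))_x/W(v̄)`, `η¹ = det[v̄,v̄_xx,v̄_xxx]/W(v̄)`,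
`η⁰ = −2 det[v̄_x,v̄_xx,v̄_xxx]/W(v̄)` satisfy the determining system for the no-go
case of regular reduction operators of the Burgers equation. -/
theorem stmt9 (v : Fin 3 → ℝ × ℝ → ℝ) (hv : ∀ i, ContDiff ℝ (⊤ : ℕ∞) (v i))
    (hheat : ∀ i, ∀ p : ℝ × ℝ, pt (v i) p + px (px (v i)) p = 0)
    (hW : ∀ p : ℝ × ℝ,
      det3 (fun i => v i p) (fun i => px (v i) p) (fun i => px (px (v i)) p) ≠ 0) :
    let W : ℝ × ℝ → ℝ := fun p =>
      det3 (fun i => v i p) (fun i => px (v i) p) (fun i => px (px (v i)) p)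
    let ξ0 : ℝ × ℝ → ℝ := fun p => px W p / W p
    let η1 : ℝ × ℝ → ℝ := fun p =>
      det3 (fun i => v i p) (fun i => px (px (v i)) p) (fun i => px (px (px (v i))) p)
        / W p
    let η0 : ℝ × ℝ → ℝ := fun p =>
      -2 * det3 (fun i => px (v i) p) (fun i => px (px (v i)) p)
        (fun i => px (px (px (v i))) p) / W p
    ∀ p : ℝ × ℝ,
      pt ξ0 p + 2 * ξ0 p * px ξ0 p + px (px ξ0) p - 2 * px η1 p = 0 ∧
      pt η1 p + 2 * px ξ0 p * η1 p + px (px η1) p + px η0 p = 0 ∧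
      pt η0 p + 2 * px ξ0 p * η0 p + px (px η0) p = 0 := by
  intro W ξ0 η1 η0 p
  have hv' : ∀ i, ContDiff ℝ ∞ (v i) := hv
  have h1 := fun i => px_smooth (hv' i)
  have h2 := fun i => px_smooth (h1 i)
  have h3 := fun i => px_smooth (h2 i)
  have sW : ContDiff ℝ ∞ W := det3_smooth hv' h1 h2
  have sξ : ContDiff ℝ ∞ ξ0 := (px_smooth sW).div sW hW
  have sη1 : ContDiff ℝ ∞ η1 := (det3_smooth hv' h2 h3).div sW hW
  have sη0 : ContDiff ℝ ∞ η0 := (contDiff_const.mul (det3_smooth h1 h2 h3)).div sW hW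
  refine lin_zero (hW p) fun i => core (hv' i) sξ sη1 sη0 (hheat i) (fun q => ?_) p
  have hWq : W q ≠ 0 := hW q
  have eW := px_W hv' q
  change px W q = _ at eW
  simp only [ξ0, η1, η0]
  rw [eW]
  field_simp
  simp only [W, det3_expand]
  fin_cases i <;> simp only [Fin.zero_eta, Fin.mk_one, Fin.reduceFinMk] <;> ring
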